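/- For every state ρ^{AB} on H_A ⊗ H_B and every n ≥ 1, one has n · E_sq(ρ^{AB}) ≤ E_F((ρ^{AB})^{⊗n}), where (ρ^{AB})^{⊗n} is regarded as a bipartite state with respect to the cut of the n copies of A versus the n copies of B. Consequently squashed entanglement is upper bounded by the entanglement cost E_C(ρ^{AB}) = lim_{n→∞} (1/n) E_F((ρ^{AB})^{⊗n}): E_sq(ρ^{AB}) ≤ E_C(ρ^{AB}). -/

import Mathlib

open Matrix BigOperators Kronecker
open scoped Classical ComplexOrder

noncomputable section

/-- A (quantum) state: positive semidefinite matrix of trace 1. -/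
def IsState {n : Type*} [Fintype n] (ρ : Matrix n n ℂ) : Prop :=
  ρ.PosSemidef ∧ ρ.trace = 1

/-- Von Neumann entropy (base 2), via the eigenvalues of a Hermitian matrix. -/
def vonNeumannEntropy {n : Type*} [Fintype n] (ρ : Matrix n n ℂ) : ℝ :=
  if h : ρ.IsHermitian then ∑ i, -(h.eigenvalues i * Real.logb 2 (h.eigenvalues i)) else 0

/-- Partial trace over the second (right) factor. -/
def ptraceR {A B : Type*} [Fintype A] [Fintype B]
    (ρ : Matrix (A × B) (A × B) ℂ) : Matrix A A ℂ :=
  fun i j => ∑ b, ρ (i, b) (j, b)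

/-- Partial trace over the first (left) factor. -/
def ptraceL {A B : Type*} [Fintype A] [Fintype B]
    (ρ : Matrix (A × B) (A × B) ℂ) : Matrix B B ℂ :=
  fun i j => ∑ a, ρ (a, i) (a, j)

variable {A B E : Type*} [Fintype A] [Fintype B] [Fintype E]

/-- Marginal of a tripartite state on `A × E` (trace out `B`). -/
def margAE (ρ : Matrix (A × B × E) (A × B × E) ℂ) : Matrix (A × E) (A × E) ℂ :=
  fun x y => ∑ b, ρ (x.1, b, x.2) (y.1, b, y.2)

/-- Marginal of a tripartite state on `B × E` (trace out `A`). -/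
def margBE (ρ : Matrix (A × B × E) (A × B × E) ℂ) : Matrix (B × E) (B × E) ℂ :=
  fun x y => ∑ a, ρ (a, x.1, x.2) (a, y.1, y.2)

/-- Marginal of a tripartite state on `E` (trace out `A` and `B`). -/
def margE (ρ : Matrix (A × B × E) (A × B × E) ℂ) : Matrix E E ℂ :=
  fun x y => ∑ a, ∑ b, ρ (a, b, x) (a, b, y)

/-- Marginal of a tripartite state on `A × B` (trace out `E`). -/
def margAB (ρ : Matrix (A × B × E) (A × B × E) ℂ) : Matrix (A × B) (A × B) ℂ :=
  fun x y => ∑ e, ρ (x.1, x.2, e) (y.1, y.2, e)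

/-- Quantum conditional mutual information `I(A;B|E) = S(AE)+S(BE)-S(ABE)-S(E)`. -/
def condMutualInfo (ρ : Matrix (A × B × E) (A × B × E) ℂ) : ℝ :=
  vonNeumannEntropy (margAE ρ) + vonNeumannEntropy (margBE ρ)
    - vonNeumannEntropy ρ - vonNeumannEntropy (margE ρ)

/-- Squashed entanglement: infimum of `(1/2) I(A;B|E)` over all finite-dimensional
extensions of `ρ`. -/
def Esq {A B : Type*} [Fintype A] [Fintype B] (ρ : Matrix (A × B) (A × B) ℂ) : ℝ :=
  sInf { x : ℝ | ∃ (d : ℕ) (ρE : Matrix (A × B × Fin d) (A × B × Fin d) ℂ),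
    IsState ρE ∧ margAB ρE = ρ ∧ x = (1 / 2) * condMutualInfo ρE }

/-- Outer product `|ψ⟩⟨ψ|`. -/
def outer {n : Type*} (ψ : n → ℂ) : Matrix n n ℂ :=
  Matrix.vecMulVec ψ (star ψ)

/-- Trace norm of a Hermitian matrix: sum of the absolute values of its eigenvalues. -/
def traceNorm {n : Type*} [Fintype n] (X : Matrix n n ℂ) : ℝ :=
  if h : X.IsHermitian then ∑ i, |h.eigenvalues i| else 0

/-- Entanglement of formation: infimum of average entanglement entropy over all
finite pure-state ensembles for `ρ`. -/
def EoF {A B : Type*} [Fintype A] [Fintype B] (ρ : Matrix (A × B) (A × B) ℂ) : ℝ :=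
  sInf { x : ℝ | ∃ (n : ℕ) (p : Fin n → ℝ) (ψ : Fin n → A × B → ℂ),
    (∀ k, 0 ≤ p k) ∧ (∑ k, p k) = 1 ∧ (∀ k, ∑ i, ‖ψ k i‖ ^ 2 = 1) ∧
    (∑ k, (p k : ℂ) • outer (ψ k)) = ρ ∧
    x = ∑ k, p k * vonNeumannEntropy (ptraceR (outer (ψ k))) }

/-- The function `η` : `η(x) = -x log₂ x` for `x ≤ 1/4`, `1/2` otherwise. -/
def eta (x : ℝ) : ℝ := if x ≤ 1 / 4 then -(x * Real.logb 2 x) else 1 / 2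

/-- The `n`-fold tensor power of a bipartite state, regarded as a bipartite state with
respect to the cut (`n` copies of `A`) versus (`n` copies of `B`). -/
def tensorPow {A B : Type*} (ρ : Matrix (A × B) (A × B) ℂ) (n : ℕ) :
    Matrix ((Fin n → A) × (Fin n → B)) ((Fin n → A) × (Fin n → B)) ℂ :=
  fun x y => ∏ i, ρ (x.1 i, x.2 i) (y.1 i, y.2 i)

/-!
The squashed entanglement is superadditive. If `E` extends a state of `AA' : BB'`, the chain rule
and strong subadditivity give `I(AA';BB'|E) ≥ I(A;B|E) + I(A';B'|EAB)`, where `E` extends the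
marginal on `AB` and `EAB` extends the marginal on `A'B'`. Hence `n · E_sq(ρ) ≤ E_sq(ρ^{⊗n})`.
Moreover `E_sq ≤ E_F`: recording the index of a pure-state ensemble in a classical register `E` is
an extension whose `I(A;B|E) / 2` is the average entanglement entropy of the ensemble.

Strong subadditivity is the monotonicity of the relative entropy `D` under partial trace, applied
to `D(ρ_{ABE} ‖ 1 ⊗ (ρ_{BE} + ε))` with `ε → 0`. For the monotonicity, `D(ρ ‖ σ)` is a regularized
integral over `t > 0` of the maximum over `X` of `2 Re Tr ρX - Tr σX*X - t Tr ρXX*`. Partial trace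
amounts to restricting `X` to a subalgebra, which lowers the maximum, while the regularizing term
depends on `Tr ρ` only.
-/

section Entropy

variable {m n K : Type*} [Fintype m] [Fintype n] [Fintype K]

lemma vonNeumannEntropy_eq_sum_negMulLog_eigenvalues [DecidableEq n] {ρ : Matrix n n ℂ}
    (hρ : ρ.IsHermitian) :
    vonNeumannEntropy ρ = (∑ i, Real.negMulLog (hρ.eigenvalues i)) / Real.log 2 := by
  rw [vonNeumannEntropy, dif_pos hρ, Finset.sum_div]
  refine Finset.sum_congr rfl fun i _ => ?_
  rw [Real.negMulLog, Real.logb, neg_mul, mul_div_assoc', neg_div]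
  congr!

lemma vonNeumannEntropy_eq_sum_roots_charpoly [DecidableEq n] {ρ : Matrix n n ℂ}
    (hρ : ρ.IsHermitian) :
    vonNeumannEntropy ρ =
      (ρ.charpoly.roots.map fun z => Real.negMulLog z.re).sum / Real.log 2 := by
  rw [vonNeumannEntropy_eq_sum_negMulLog_eigenvalues hρ, hρ.roots_charpoly_eq_eigenvalues,
    Multiset.map_map, Finset.sum_map_val]
  rfl

lemma vonNeumannEntropy_mul_comm {M : Matrix m n ℂ} {N : Matrix n m ℂ}
    (hMN : (M * N).IsHermitian) (hNM : (N * M).IsHermitian) :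
    vonNeumannEntropy (M * N) = vonNeumannEntropy (N * M) := by
  have h := congrArg
    (fun p : Polynomial ℂ => (p.roots.map fun z => Real.negMulLog z.re).sum)
    (charpoly_mul_comm' M N)
  have hX : ∀ k : ℕ, (Polynomial.X ^ k : Polynomial ℂ) ≠ 0 := fun k =>
    pow_ne_zero k Polynomial.X_ne_zero
  rw [vonNeumannEntropy_eq_sum_roots_charpoly hMN, vonNeumannEntropy_eq_sum_roots_charpoly hNM]
  -- The characteristic polynomials agree up to roots at `0`, where `negMulLog` vanishes.
  simp_all [Polynomial.roots_mul, (charpoly_monic _).ne_zero, Multiset.map_nsmul,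
    Multiset.sum_nsmul]

lemma vonNeumannEntropy_submatrix_equiv (ρ : Matrix n n ℂ) (e : m ≃ n) :
    vonNeumannEntropy (ρ.submatrix e e) = vonNeumannEntropy ρ := by
  by_cases hρ : ρ.IsHermitian
  · rw [vonNeumannEntropy_eq_sum_roots_charpoly hρ,
      vonNeumannEntropy_eq_sum_roots_charpoly (hρ.submatrix e), ← charpoly_reindex e.symm ρ]
    rfl
  · rw [vonNeumannEntropy, vonNeumannEntropy, dif_neg hρ,
      dif_neg (mt (isHermitian_submatrix_equiv e).1 hρ)]

lemma vonNeumannEntropy_transpose (ρ : Matrix n n ℂ) :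
    vonNeumannEntropy ρᵀ = vonNeumannEntropy ρ := by
  by_cases hρ : ρ.IsHermitian
  · rw [vonNeumannEntropy_eq_sum_roots_charpoly hρ,
      vonNeumannEntropy_eq_sum_roots_charpoly hρ.transpose, charpoly_transpose]
  · rw [vonNeumannEntropy, vonNeumannEntropy, dif_neg hρ,
      dif_neg (mt isHermitian_transpose_iff.1 hρ)]

lemma vonNeumannEntropy_diagonal [DecidableEq n] (p : n → ℝ) :
    vonNeumannEntropy (diagonal fun i => (p i : ℂ)) =
      (∑ i, Real.negMulLog (p i)) / Real.log 2 := by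
  have hp : (diagonal fun i => (p i : ℂ)).IsHermitian :=
    isHermitian_diagonal_iff.2 fun i => Complex.conj_ofReal (p i)
  rw [vonNeumannEntropy_eq_sum_roots_charpoly hp, charpoly_diagonal, Polynomial.roots_prod _ _
    (Finset.prod_ne_zero_iff.2 fun i _ => Polynomial.X_sub_C_ne_zero _)]
  simp

lemma charmatrix_blockDiagonal {R : Type*} [CommRing R] [DecidableEq n] [DecidableEq K]
    (M : K → Matrix n n R) :
    charmatrix (blockDiagonal M) = blockDiagonal fun k => charmatrix (M k) := by
  ext1 ⟨i, k⟩ ⟨j, l⟩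
  by_cases hkl : k = l <;> by_cases hij : i = j <;>
    simp [blockDiagonal_apply, hkl, hij]

lemma charpoly_blockDiagonal {R : Type*} [CommRing R] [DecidableEq n] [DecidableEq K]
    (M : K → Matrix n n R) :
    (blockDiagonal M).charpoly = ∏ k, (M k).charpoly := by
  rw [charpoly, charmatrix_blockDiagonal, det_blockDiagonal]
  rfl

lemma vonNeumannEntropy_blockDiagonal [DecidableEq K] {M : K → Matrix n n ℂ}
    (hM : ∀ k, (M k).IsHermitian) :
    vonNeumannEntropy (blockDiagonal M) = ∑ k, vonNeumannEntropy (M k) := by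
  rw [vonNeumannEntropy_eq_sum_roots_charpoly (isHermitian_blockDiagonal_iff.2 hM),
    charpoly_blockDiagonal, Polynomial.roots_prod _ _
      (Finset.prod_ne_zero_iff.2 fun k _ => (charpoly_monic _).ne_zero)]
  simp [Multiset.map_bind, Multiset.sum_bind, Finset.sum_div,
    vonNeumannEntropy_eq_sum_roots_charpoly (hM _)]

variable [DecidableEq n]

lemma trace_cfc {A : Matrix n n ℂ} (hA : A.IsHermitian) (f : ℝ → ℝ) :
    (cfc f A).trace = ∑ i, (f (hA.eigenvalues i) : ℂ) := by
  rw [hA.cfc_eq, IsHermitian.cfc, Unitary.conjStarAlgAut_apply, trace_mul_cycle,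
    Unitary.coe_star_mul_self, one_mul, trace_diagonal]
  rfl

lemma self_mul_cfc {A : Matrix n n ℂ} (hA : A.IsHermitian) (f : ℝ → ℝ) :
    A * cfc f A = cfc (fun x => x * f x) A := by
  rw [cfc_mul (fun x => x) f A (by fun_prop) (finite_real_spectrum.continuousOn _),
    cfc_id' ℝ A hA.isSelfAdjoint]

lemma re_trace_self_mul_cfc {A : Matrix n n ℂ} (hA : A.IsHermitian) (f : ℝ → ℝ) :
    (A * cfc f A).trace.re = ∑ i, hA.eigenvalues i * f (hA.eigenvalues i) := by
  rw [self_mul_cfc hA, trace_cfc hA, Complex.re_sum]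
  rfl

lemma re_trace_self_mul_cfc_log {ρ : Matrix n n ℂ} (hρ : ρ.IsHermitian) :
    (ρ * cfc Real.log ρ).trace.re = -(Real.log 2 * vonNeumannEntropy ρ) := by
  rw [re_trace_self_mul_cfc hρ, vonNeumannEntropy_eq_sum_negMulLog_eigenvalues hρ,
    mul_div_cancel₀ _ (Real.log_pos one_lt_two).ne']
  simp [Real.negMulLog]

lemma vonNeumannEntropy_eq_trace_cfc {ρ : Matrix n n ℂ} (hρ : ρ.IsHermitian) :
    vonNeumannEntropy ρ = (cfc Real.negMulLog ρ).trace.re / Real.log 2 := by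
  rw [vonNeumannEntropy_eq_sum_negMulLog_eigenvalues hρ, trace_cfc hρ]
  simp

omit [DecidableEq n] in
lemma vonNeumannEntropy_smul {ρ : Matrix n n ℂ} (hρ : ρ.IsHermitian) (c : ℝ) :
    vonNeumannEntropy ((c : ℂ) • ρ) =
      c * vonNeumannEntropy ρ + ρ.trace.re * (Real.negMulLog c / Real.log 2) := by
  have hcρ : ((c : ℂ) • ρ).IsHermitian := hρ.smul (Complex.conj_ofReal c)
  have hη : ContinuousOn Real.negMulLog (spectrum ℝ ρ) := Real.continuous_negMulLog.continuousOn
  have hcfc : cfc Real.negMulLog ((c : ℂ) • ρ) =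
      Real.negMulLog c • ρ + c • cfc Real.negMulLog ρ := by
    have hsa : IsSelfAdjoint ρ := hρ
    calc cfc Real.negMulLog ((c : ℂ) • ρ)
        = cfc (fun x => Real.negMulLog c • x + c • Real.negMulLog x) ρ := by
          rw [Complex.coe_smul, ← cfc_comp_smul c Real.negMulLog ρ
            Real.continuous_negMulLog.continuousOn]
          simp only [smul_eq_mul, Real.negMulLog_mul, mul_comm]
      _ = Real.negMulLog c • ρ + c • cfc Real.negMulLog ρ := by
          rw [cfc_add ρ (fun x => Real.negMulLog c • x) (fun x => c • Real.negMulLog x)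
            (by fun_prop) (hη.const_smul c), cfc_smul_id _ ρ, cfc_smul c _ ρ hη]
  rw [vonNeumannEntropy_eq_trace_cfc hcρ, vonNeumannEntropy_eq_trace_cfc hρ, hcfc]
  simp only [trace_add, trace_smul, Complex.real_smul, Complex.add_re, Complex.re_ofReal_mul]
  ring

lemma re_trace_self_mul_cfc_log_add_smul_one {A : Matrix n n ℂ} (hA : A.IsHermitian) (ε : ℝ) :
    (A * cfc Real.log (A + ε • 1)).trace.re =
      ∑ i, hA.eigenvalues i * Real.log (hA.eigenvalues i + ε) := by
  have hshift : A + ε • 1 = cfc (fun x => x + ε) A := by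
    rw [cfc_add_const ε (fun x => x) A (by fun_prop) hA.isSelfAdjoint,
      cfc_id' ℝ A hA.isSelfAdjoint, Algebra.algebraMap_eq_smul_one]
  rw [hshift, ← cfc_comp' Real.log (fun x => x + ε) A
    ((finite_real_spectrum.image _).continuousOn _) (by fun_prop) hA.isSelfAdjoint,
    re_trace_self_mul_cfc hA]

lemma tendsto_re_trace_self_mul_cfc_log_add_smul_one {τ : Matrix n n ℂ} (hτ : τ.IsHermitian) :
    Filter.Tendsto (fun ε : ℝ => (τ * cfc Real.log (τ + ε • 1)).trace.re) (nhds 0)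
      (nhds (-(Real.log 2 * vonNeumannEntropy τ))) := by
  simp only [← re_trace_self_mul_cfc_log hτ, re_trace_self_mul_cfc hτ,
    re_trace_self_mul_cfc_log_add_smul_one hτ]
  refine tendsto_finsetSum _ fun i _ => ?_
  obtain h | h := eq_or_ne (hτ.eigenvalues i) 0
  · simp [h]
  · have hcont : ContinuousAt (fun ε => hτ.eigenvalues i * Real.log (hτ.eigenvalues i + ε)) 0 :=
      continuousAt_const.mul ((continuousAt_const.add continuousAt_id).log (by simpa using h))
    simpa using hcont.tendsto

end Entropy

section ScalarComparison

variable {ι κ : Type*} [Fintype ι] [Fintype κ]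

lemma hasDerivAt_mul_log_add_mul {p q T : ℝ} (hp : 0 ≤ p) (hq : 0 < q) (hT : 0 ≤ T) :
    HasDerivAt (fun T => p * Real.log (q + T * p)) (p ^ 2 / (q + T * p)) T := by
  have hlin : HasDerivAt (fun T => q + T * p) p T := by
    simpa using ((hasDerivAt_id T).mul_const p).const_add q
  have hpos : q + T * p ≠ 0 := by positivity
  exact ((hlin.log hpos).const_mul p).congr_deriv (by ring)

lemma tendsto_mul_log_add_mul_sub {p q : ℝ} (hp : 0 ≤ p) (hq : 0 < q) :
    Filter.Tendsto (fun T => p * Real.log (q + T * p) - p * Real.log T) Filter.atTop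
      (nhds (p * Real.log p)) := by
  obtain rfl | hp := hp.eq_or_lt
  · simp
  have hlim : Filter.Tendsto (fun T => q / T + p) Filter.atTop (nhds p) := by
    simpa using (tendsto_const_nhds.div_atTop Filter.tendsto_id).add_const p
  refine ((hlim.log hp.ne').const_mul p).congr' ?_
  filter_upwards [Filter.eventually_gt_atTop 0] with T hT
  rw [← mul_sub, ← Real.log_div (by positivity) hT.ne']
  congr 2
  field_simp

lemma tendsto_sum_mul_log_add_mul_sub {w p q : ι → ℝ} (hp : ∀ i, 0 ≤ p i) (hq : ∀ i, 0 < q i) :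
    Filter.Tendsto
      (fun T => (∑ i, w i * (p i * Real.log (q i + T * p i) - p i * Real.log (q i))) -
        (∑ i, w i * p i) * Real.log T) Filter.atTop
      (nhds (∑ i, w i * (p i * Real.log (p i) - p i * Real.log (q i)))) := by
  refine (tendsto_finsetSum Finset.univ fun i _ =>
    ((tendsto_mul_log_add_mul_sub (hp i) (hq i)).sub_const (p i * Real.log (q i))).const_mul
      (w i)).congr fun T => ?_
  rw [Finset.sum_mul, ← Finset.sum_sub_distrib]
  exact Finset.sum_congr rfl fun i _ => by ring

lemma hasDerivAt_sum_mul_log_add_mul {w p q : ι → ℝ} (hp : ∀ i, 0 ≤ p i) (hq : ∀ i, 0 < q i)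
    {T : ℝ} (hT : 0 ≤ T) :
    HasDerivAt (fun T => ∑ i, w i * (p i * Real.log (q i + T * p i) - p i * Real.log (q i)))
      (∑ i, w i * (p i ^ 2 / (q i + T * p i))) T :=
  HasDerivAt.fun_sum fun i _ =>
    ((hasDerivAt_mul_log_add_mul (hp i) (hq i) hT).sub_const _).const_mul (w i)

-- `∑ w p (log p - log q)` is the limit of `∫₀ᵀ ∑ w p² / (q + t p) dt - (∑ w p) log T`.
lemma sum_mul_log_sub_log_le {w p q : ι → ℝ} {w' p' q' : κ → ℝ}
    (hp : ∀ i, 0 ≤ p i) (hq : ∀ i, 0 < q i) (hp' : ∀ j, 0 ≤ p' j) (hq' : ∀ j, 0 < q' j)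
    (hsum : ∑ j, w' j * p' j = ∑ i, w i * p i)
    (h : ∀ t, 0 < t →
      ∑ j, w' j * (p' j ^ 2 / (q' j + t * p' j)) ≤ ∑ i, w i * (p i ^ 2 / (q i + t * p i))) :
    ∑ j, w' j * (p' j * Real.log (p' j) - p' j * Real.log (q' j)) ≤
      ∑ i, w i * (p i * Real.log (p i) - p i * Real.log (q i)) := by
  let gap : ℝ → ℝ := fun T =>
    (∑ i, w i * (p i * Real.log (q i + T * p i) - p i * Real.log (q i))) -
      ∑ j, w' j * (p' j * Real.log (q' j + T * p' j) - p' j * Real.log (q' j))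
  have hderiv : ∀ T, 0 ≤ T → HasDerivAt gap _ T := fun T hT =>
    (hasDerivAt_sum_mul_log_add_mul hp hq hT).sub (hasDerivAt_sum_mul_log_add_mul hp' hq' hT)
  have hmono : MonotoneOn gap (Set.Ici 0) := by
    refine monotoneOn_of_deriv_nonneg (convex_Ici 0)
      (fun T hT => (hderiv T hT).continuousAt.continuousWithinAt)
      (fun T hT => (hderiv T (interior_subset hT)).differentiableAt.differentiableWithinAt)
      fun T hT => ?_
    rw [(hderiv T (interior_subset hT)).deriv, sub_nonneg]
    exact h T (by simpa using hT)
  have hzero : gap 0 = 0 := by simp [gap]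
  have hlim : Filter.Tendsto gap Filter.atTop (nhds _) :=
    ((tendsto_sum_mul_log_add_mul_sub hp hq).sub
      (tendsto_sum_mul_log_add_mul_sub hp' hq')).congr fun T => by
        rw [hsum]
        exact sub_sub_sub_cancel_right _ _ _
  refine sub_nonneg.1 (ge_of_tendsto hlim ?_)
  filter_upwards [Filter.eventually_ge_atTop 0] with T hT
  exact hzero ▸ hmono Set.self_mem_Ici hT hT

end ScalarComparison

section RelativeEntropy

variable {n : Type*} [Fintype n] [DecidableEq n] {ρ σ : Matrix n n ℂ}

lemma conjTranspose_eigenvectorUnitary_mul_self (hρ : ρ.IsHermitian) :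
    hρ.eigenvectorUnitary.1ᴴ * hρ.eigenvectorUnitary.1 = 1 :=
  Unitary.coe_star_mul_self _

lemma eigenvectorUnitary_mul_conjTranspose_self (hρ : ρ.IsHermitian) :
    hρ.eigenvectorUnitary.1 * hρ.eigenvectorUnitary.1ᴴ = 1 :=
  Unitary.coe_mul_star_self _

lemma cfc_eq_eigenvectorUnitary_mul_diagonal_mul (hρ : ρ.IsHermitian) (f : ℝ → ℝ) :
    cfc f ρ = hρ.eigenvectorUnitary.1 * diagonal (fun i => (f (hρ.eigenvalues i) : ℂ)) *
      hρ.eigenvectorUnitary.1ᴴ := by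
  rw [hρ.cfc_eq, IsHermitian.cfc, Unitary.conjStarAlgAut_apply]
  rfl

lemma trace_cfc_mul_conj (hρ : ρ.IsHermitian) (f : ℝ → ℝ) (N : Matrix n n ℂ) :
    (cfc f ρ * (hρ.eigenvectorUnitary.1 * N * hρ.eigenvectorUnitary.1ᴴ)).trace =
      (diagonal (fun i => (f (hρ.eigenvalues i) : ℂ)) * N).trace := by
  set U := hρ.eigenvectorUnitary.1 with hU
  set D := diagonal fun i => (f (hρ.eigenvalues i) : ℂ) with hD
  have hUU : Uᴴ * U = 1 := conjTranspose_eigenvectorUnitary_mul_self hρ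
  calc (cfc f ρ * (U * N * Uᴴ)).trace
      = (U * (D * (Uᴴ * U) * N * Uᴴ)).trace := by
        rw [cfc_eq_eigenvectorUnitary_mul_diagonal_mul hρ]
        simp only [Matrix.mul_assoc, hU, hD]
    _ = (D * N).trace := by
        rw [trace_mul_comm, hUU, Matrix.mul_assoc _ Uᴴ U, hUU, Matrix.mul_one, Matrix.mul_one]

lemma trace_mul_conj (hρ : ρ.IsHermitian) (N : Matrix n n ℂ) :
    (ρ * (hρ.eigenvectorUnitary.1 * N * hρ.eigenvectorUnitary.1ᴴ)).trace =
      (diagonal (fun i => (hρ.eigenvalues i : ℂ)) * N).trace := by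
  have h := trace_cfc_mul_conj hρ (fun x => x) N
  rwa [cfc_id' ℝ ρ hρ.isSelfAdjoint] at h

lemma re_trace_diagonal_mul_mul (p : n → ℝ) (M N : Matrix n n ℂ) :
    (diagonal (fun j => (p j : ℂ)) * (M * N)).trace.re =
      ∑ ij : n × n, p ij.2 * (M ij.2 ij.1 * N ij.1 ij.2).re := by
  rw [Fintype.sum_prod_type_right, trace, Complex.re_sum]
  refine Finset.sum_congr rfl fun j _ => ?_
  rw [diag_apply, diagonal_mul, Complex.re_ofReal_mul, Matrix.mul_apply, Complex.re_sum,
    Finset.mul_sum]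

lemma re_trace_diagonal_mul_conjTranspose (p : n → ℝ) (M : Matrix n n ℂ) :
    (diagonal (fun j => (p j : ℂ)) * (M * Mᴴ)).trace.re =
      ∑ ij : n × n, p ij.2 * Complex.normSq (M ij.2 ij.1) := by
  simp only [re_trace_diagonal_mul_mul, conjTranspose_apply, Complex.star_def, Complex.mul_conj,
    Complex.ofReal_re]

/-- The inner products `⟨vᵢ, uⱼ⟩` between the eigenvectors `vᵢ` of `σ` and `uⱼ` of `ρ`; they
relate the two spectral decompositions in the trace of a product of functions of `ρ` and `σ`. -/
def eigenOverlap (hρ : ρ.IsHermitian) (hσ : σ.IsHermitian) : Matrix n n ℂ :=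
  hσ.eigenvectorUnitary.1ᴴ * hρ.eigenvectorUnitary.1

lemma re_trace_cfc_mul_cfc (hρ : ρ.IsHermitian) (hσ : σ.IsHermitian) (f g : ℝ → ℝ) :
    (cfc f ρ * cfc g σ).trace.re =
      ∑ ij : n × n, Complex.normSq (eigenOverlap hρ hσ ij.1 ij.2) *
        (f (hρ.eigenvalues ij.2) * g (hσ.eigenvalues ij.1)) := by
  set U := hρ.eigenvectorUnitary.1
  set W := eigenOverlap hρ hσ with hW
  set Q := diagonal fun i => (g (hσ.eigenvalues i) : ℂ) with hQ
  have hUU : U * Uᴴ = 1 := eigenvectorUnitary_mul_conjTranspose_self hρ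
  have hcfc : cfc g σ = U * (Wᴴ * Q * W) * Uᴴ := by
    calc cfc g σ = (U * Uᴴ) * cfc g σ * (U * Uᴴ) := by rw [hUU, one_mul, mul_one]
      _ = U * (Wᴴ * Q * W) * Uᴴ := by
        rw [cfc_eq_eigenvectorUnitary_mul_diagonal_mul hσ, hW, eigenOverlap, conjTranspose_mul,
          conjTranspose_conjTranspose]
        simp only [Matrix.mul_assoc, hQ]
        rfl
  rw [hcfc, trace_cfc_mul_conj hρ, re_trace_diagonal_mul_mul]
  refine Finset.sum_congr rfl fun ij _ => ?_
  simp only [hQ, mul_diagonal, conjTranspose_apply, RCLike.star_def, Complex.mul_re,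
    Complex.conj_re, Complex.ofReal_re, Complex.conj_im, Complex.ofReal_im, mul_zero, sub_zero,
    Complex.mul_im, neg_mul, zero_add, sub_neg_eq_add, Complex.normSq_apply]
  ring

lemma sum_normSq_eigenOverlap_mul_eigenvalues (hρ : ρ.IsHermitian) (hσ : σ.IsHermitian) :
    ∑ ij : n × n, Complex.normSq (eigenOverlap hρ hσ ij.1 ij.2) * hρ.eigenvalues ij.2 =
      ρ.trace.re := by
  have h := re_trace_cfc_mul_cfc hρ hσ (fun x => x) (fun _ => 1)
  rw [cfc_id' ℝ ρ hρ.isSelfAdjoint, cfc_const_one ℝ σ hσ.isSelfAdjoint, mul_one] at h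
  simpa only [mul_one] using h.symm

/-- Umegaki's relative entropy `Tr ρ (log ρ - log σ)` in natural units, used for positive
definite `σ` (otherwise `log 0 = 0` replaces the value `∞`). -/
def relEntropy (ρ σ : Matrix n n ℂ) : ℝ :=
  (ρ * (cfc Real.log ρ - cfc Real.log σ)).trace.re

lemma relEntropy_eq_sum (hρ : ρ.IsHermitian) (hσ : σ.IsHermitian) :
    relEntropy ρ σ = ∑ ij : n × n, Complex.normSq (eigenOverlap hρ hσ ij.1 ij.2) *
      (hρ.eigenvalues ij.2 * Real.log (hρ.eigenvalues ij.2) -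
        hρ.eigenvalues ij.2 * Real.log (hσ.eigenvalues ij.1)) := by
  have hρρ : ρ * cfc Real.log ρ = cfc (fun x => x * Real.log x) ρ * cfc (fun _ => (1 : ℝ)) σ := by
    rw [cfc_const_one ℝ σ hσ.isSelfAdjoint, mul_one, self_mul_cfc hρ]
  have hρσ : ρ * cfc Real.log σ = cfc (fun x : ℝ => x) ρ * cfc Real.log σ := by
    rw [cfc_id' ℝ ρ hρ.isSelfAdjoint]
  rw [relEntropy, Matrix.mul_sub, hρρ, hρσ, trace_sub, Complex.sub_re,
    re_trace_cfc_mul_cfc hρ hσ, re_trace_cfc_mul_cfc hρ hσ, ← Finset.sum_sub_distrib]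
  exact Finset.sum_congr rfl fun ij _ => by ring

/-- The quadratic functional `X ↦ 2 Re Tr ρX - Tr σX*X - t Tr ρXX*`; its maximum over `X` is
the function `t ↦ ∑ |⟨vᵢ, uⱼ⟩|² pⱼ² / (qᵢ + t pⱼ)` whose integral is the relative entropy. -/
def quadFunctional (ρ σ : Matrix n n ℂ) (t : ℝ) (X : Matrix n n ℂ) : ℝ :=
  2 * (ρ * X).trace.re - (σ * (Xᴴ * X)).trace.re - t * (ρ * (X * Xᴴ)).trace.re

lemma quadFunctional_eigenvectorUnitary_mul_mul (hρ : ρ.IsHermitian) (hσ : σ.IsHermitian) (t : ℝ)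
    (Z : Matrix n n ℂ) :
    quadFunctional ρ σ t (hρ.eigenvectorUnitary.1 * Z * hσ.eigenvectorUnitary.1ᴴ) =
      ∑ ij : n × n, (2 * hρ.eigenvalues ij.2 * (Z ij.2 ij.1 * eigenOverlap hρ hσ ij.1 ij.2).re -
        (hσ.eigenvalues ij.1 + t * hρ.eigenvalues ij.2) * Complex.normSq (Z ij.2 ij.1)) := by
  set U := hρ.eigenvectorUnitary.1 with hU
  set V := hσ.eigenvectorUnitary.1 with hV
  have hUU : Uᴴ * U = 1 := conjTranspose_eigenvectorUnitary_mul_self hρ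
  have hUU' : U * Uᴴ = 1 := eigenvectorUnitary_mul_conjTranspose_self hρ
  have hVV : Vᴴ * V = 1 := conjTranspose_eigenvectorUnitary_mul_self hσ
  have hlin : (ρ * (U * Z * Vᴴ)).trace.re = ∑ ij : n × n,
      hρ.eigenvalues ij.2 * (Z ij.2 ij.1 * eigenOverlap hρ hσ ij.1 ij.2).re := by
    have hX : U * Z * Vᴴ = U * (Z * eigenOverlap hρ hσ) * Uᴴ := by
      simp only [eigenOverlap, ← hU, ← hV, Matrix.mul_assoc, hUU', Matrix.mul_one]
    rw [hX, trace_mul_conj hρ, re_trace_diagonal_mul_mul]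
  have hright : (ρ * (U * Z * Vᴴ * (U * Z * Vᴴ)ᴴ)).trace.re =
      ∑ ij : n × n, hρ.eigenvalues ij.2 * Complex.normSq (Z ij.2 ij.1) := by
    have hX : U * Z * Vᴴ * (U * Z * Vᴴ)ᴴ = U * (Z * Zᴴ) * Uᴴ := by
      simp only [conjTranspose_mul, conjTranspose_conjTranspose, Matrix.mul_assoc]
      rw [← Matrix.mul_assoc Vᴴ, hVV, Matrix.one_mul]
    rw [hX, trace_mul_conj hρ, re_trace_diagonal_mul_conjTranspose]
  have hleft : (σ * ((U * Z * Vᴴ)ᴴ * (U * Z * Vᴴ))).trace.re =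
      ∑ ij : n × n, hσ.eigenvalues ij.1 * Complex.normSq (Z ij.2 ij.1) := by
    have hX : (U * Z * Vᴴ)ᴴ * (U * Z * Vᴴ) = V * (Zᴴ * Zᴴᴴ) * Vᴴ := by
      simp only [conjTranspose_mul, conjTranspose_conjTranspose, Matrix.mul_assoc]
      rw [← Matrix.mul_assoc Uᴴ, hUU, Matrix.one_mul]
    rw [hX, trace_mul_conj hσ, re_trace_diagonal_mul_conjTranspose,
      ← (Equiv.prodComm n n).sum_comp]
    simp [Complex.normSq_conj]
  rw [quadFunctional, hlin, hleft, hright, Finset.mul_sum, Finset.mul_sum,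
    ← Finset.sum_sub_distrib, ← Finset.sum_sub_distrib]
  exact Finset.sum_congr rfl fun ij _ => by ring

lemma two_mul_re_mul_sub_mul_normSq {a : ℝ} (ha : a ≠ 0) (p : ℝ) (z w : ℂ) :
    2 * p * (z * w).re - a * Complex.normSq z =
      Complex.normSq w * (p ^ 2 / a) -
        a * Complex.normSq (z - (p / a : ℝ) * (starRingEnd ℂ) w) := by
  simp only [Complex.normSq_apply, Complex.mul_re, Complex.sub_re, Complex.sub_im,
    Complex.conj_re, Complex.conj_im, Complex.mul_im, Complex.ofReal_re, Complex.ofReal_im]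
  field_simp
  ring

lemma isGreatest_range_quadFunctional (hρ : ρ.PosSemidef) (hσ : σ.PosDef) {t : ℝ} (ht : 0 ≤ t) :
    IsGreatest (Set.range (quadFunctional ρ σ t))
      (∑ ij : n × n, Complex.normSq (eigenOverlap hρ.1 hσ.1 ij.1 ij.2) *
        (hρ.1.eigenvalues ij.2 ^ 2 / (hσ.1.eigenvalues ij.1 + t * hρ.1.eigenvalues ij.2))) := by
  have hpos : ∀ ij : n × n, 0 < hσ.1.eigenvalues ij.1 + t * hρ.1.eigenvalues ij.2 := fun ij =>
    add_pos_of_pos_of_nonneg (hσ.eigenvalues_pos _) (mul_nonneg ht (hρ.eigenvalues_nonneg _))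
  constructor
  · let Z : Matrix n n ℂ := fun j i =>
      (hρ.1.eigenvalues j / (hσ.1.eigenvalues i + t * hρ.1.eigenvalues j) : ℝ) *
        (starRingEnd ℂ) (eigenOverlap hρ.1 hσ.1 i j)
    refine ⟨_, (quadFunctional_eigenvectorUnitary_mul_mul hρ.1 hσ.1 t Z).trans
      (Finset.sum_congr rfl fun ij _ => ?_)⟩
    rw [two_mul_re_mul_sub_mul_normSq (hpos ij).ne']
    simp [Z]
  · rintro _ ⟨X, rfl⟩
    set U := hρ.1.eigenvectorUnitary.1
    set V := hσ.1.eigenvectorUnitary.1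
    have hX : X = U * (Uᴴ * X * V) * Vᴴ := by
      simp only [Matrix.mul_assoc, U, V, eigenvectorUnitary_mul_conjTranspose_self, Matrix.mul_one]
      simp only [← Matrix.mul_assoc, eigenvectorUnitary_mul_conjTranspose_self, Matrix.one_mul]
    rw [hX, quadFunctional_eigenvectorUnitary_mul_mul hρ.1 hσ.1]
    refine Finset.sum_le_sum fun ij _ => ?_
    rw [two_mul_re_mul_sub_mul_normSq (hpos ij).ne']
    exact sub_le_self _ (mul_nonneg (hpos ij).le (Complex.normSq_nonneg _))

lemma relEntropy_le_of_quadFunctional {m : Type*} [Fintype m] [DecidableEq m]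
    {ρ' σ' : Matrix m m ℂ} (hρ : ρ.PosSemidef) (hσ : σ.PosDef) (hρ' : ρ'.PosSemidef)
    (hσ' : σ'.PosDef) (htrace : ρ'.trace = ρ.trace)
    (hquad : ∀ t, Set.range (quadFunctional ρ' σ' t) ⊆ Set.range (quadFunctional ρ σ t)) :
    relEntropy ρ' σ' ≤ relEntropy ρ σ := by
  rw [relEntropy_eq_sum hρ.1 hσ.1, relEntropy_eq_sum hρ'.1 hσ'.1]
  refine sum_mul_log_sub_log_le (fun _ => hρ.eigenvalues_nonneg _) (fun _ => hσ.eigenvalues_pos _)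
    (fun _ => hρ'.eigenvalues_nonneg _) (fun _ => hσ'.eigenvalues_pos _) ?_ fun t ht =>
      (isGreatest_range_quadFunctional hρ' hσ' ht.le).mono
        (isGreatest_range_quadFunctional hρ hσ ht.le) (hquad t)
  rw [sum_normSq_eigenOverlap_mul_eigenvalues, sum_normSq_eigenOverlap_mul_eigenvalues, htrace]

-- Restricting `X` to the range of `Λ` can only shrink the maximum of `quadFunctional`.
lemma relEntropy_le_of_starAlgHom {m : Type*} [Fintype m] [DecidableEq m]
    (Λ : Matrix m m ℂ →⋆ₐ[ℂ] Matrix n n ℂ) {ρ' σ' : Matrix m m ℂ}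
    (hρ : ρ.PosSemidef) (hσ : σ.PosDef) (hρ' : ρ'.PosSemidef) (hσ' : σ'.PosDef)
    (hρΛ : ∀ X, (ρ' * X).trace = (ρ * Λ X).trace) (hσΛ : ∀ X, (σ' * X).trace = (σ * Λ X).trace) :
    relEntropy ρ' σ' ≤ relEntropy ρ σ := by
  have htrace : ρ'.trace = ρ.trace := by simpa using hρΛ 1
  refine relEntropy_le_of_quadFunctional hρ hσ hρ' hσ' htrace fun t => ?_
  rintro _ ⟨X, rfl⟩
  refine ⟨Λ X, ?_⟩
  simp only [quadFunctional, hρΛ, hσΛ, map_mul, ← star_eq_conjTranspose, map_star]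

end RelativeEntropy

section PartialTrace

lemma posSemidef_of_eq_sum_submatrix {C m n : Type*} [Fintype C] {ρ : Matrix m m ℂ}
    (hρ : ρ.PosSemidef) (f : C → n → m) {τ : Matrix n n ℂ}
    (hτ : ∀ i j, τ i j = ∑ c, ρ (f c i) (f c j)) : τ.PosSemidef := by
  have h : τ = ∑ c, ρ.submatrix (f c) (f c) := by
    ext i j
    simp only [hτ, Matrix.sum_apply, submatrix_apply]
  rw [h]
  exact posSemidef_sum _ fun c _ => hρ.submatrix _

lemma ptraceL_posSemidef {C n : Type*} [Fintype C] [Fintype n] {ρ : Matrix (C × n) (C × n) ℂ}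
    (hρ : ρ.PosSemidef) : (ptraceL ρ).PosSemidef :=
  posSemidef_of_eq_sum_submatrix hρ Prod.mk fun _ _ => rfl

end PartialTrace

section Ampliation

variable {C m n : Type*} [Fintype C] [Fintype m] [Fintype n]
variable [DecidableEq C] [DecidableEq m] [DecidableEq n]

/-- The embedding `X ↦ 1 ⊗ X` of the observables of a subsystem `n` into those of a system `m`
which is identified with `C × n` by `e`; it is dual to the partial trace over `C`. -/
def ampliation (e : m ≃ C × n) : Matrix n n ℂ →⋆ₐ[ℂ] Matrix m m ℂ where
  toFun X := ((1 : Matrix C C ℂ) ⊗ₖ X).submatrix e e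
  map_one' := by rw [one_kronecker_one, submatrix_one_equiv]
  map_mul' X Y := by rw [submatrix_mul_equiv, ← mul_kronecker_mul, one_mul]
  map_zero' := by rw [kronecker_zero, submatrix_zero]; rfl
  map_add' X Y := by rw [kronecker_add, submatrix_add]; rfl
  commutes' c := by
    simp only [Algebra.algebraMap_eq_smul_one, kronecker_smul, one_kronecker_one, submatrix_smul,
      Pi.smul_apply, submatrix_one_equiv]
  map_star' X := by
    simp only [star_eq_conjTranspose, conjTranspose_submatrix, conjTranspose_kronecker,
      conjTranspose_one]

lemma trace_mul_ampliation (e : m ≃ C × n) (ρ : Matrix m m ℂ) (X : Matrix n n ℂ) :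
    (ρ * ampliation e X).trace = (ptraceL (ρ.submatrix e.symm e.symm) * X).trace := by
  have hreindex : ρ * ampliation e X =
      (ρ.submatrix e.symm e.symm * ((1 : Matrix C C ℂ) ⊗ₖ X)).submatrix e e := by
    rw [← submatrix_mul_equiv _ _ e e e, submatrix_submatrix, Equiv.symm_comp_self, submatrix_id_id]
    rfl
  rw [hreindex, trace, ← e.symm.sum_comp, Fintype.sum_prod_type_right]
  simp only [diag_apply, submatrix_apply, Equiv.apply_symm_apply, Matrix.mul_apply, trace, ptraceL,
    kronecker_apply, one_apply, Fintype.sum_prod_type, Finset.sum_mul, ite_mul, one_mul, zero_mul,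
    mul_ite, mul_zero, Finset.sum_ite_irrel, Finset.sum_const_zero,
    Finset.sum_ite_eq', Finset.mem_univ, if_true]
  exact Finset.sum_congr rfl fun i _ => Finset.sum_comm

lemma ampliation_cfc (e : m ≃ C × n) {τ : Matrix n n ℂ} (hτ : τ.IsHermitian) (f : ℝ → ℝ) :
    ampliation e (cfc f τ) = cfc f (ampliation e τ) := by
  have hcont : Continuous (ampliation e) :=
    (ampliation e).toAlgHom.toLinearMap.continuous_of_finiteDimensional
  exact StarAlgHom.map_cfc (ampliation e) f τ (finite_real_spectrum.continuousOn _) hcont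
    hτ.isSelfAdjoint (hτ.isSelfAdjoint.map (ampliation e))

lemma posDef_ampliation (e : m ≃ C × n) {τ : Matrix n n ℂ} (hτ : τ.PosDef) :
    (ampliation e τ).PosDef :=
  (PosDef.one.kronecker hτ).submatrix e.injective

omit [DecidableEq C] in
lemma relEntropy_ptraceL_le (e : m ≃ C × n) {ρ σ : Matrix m m ℂ}
    (hρ : ρ.PosSemidef) (hσ : σ.PosDef) (hσ' : (ptraceL (σ.submatrix e.symm e.symm)).PosDef) :
    relEntropy (ptraceL (ρ.submatrix e.symm e.symm)) (ptraceL (σ.submatrix e.symm e.symm)) ≤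
      relEntropy ρ σ :=
  relEntropy_le_of_starAlgHom (ampliation e) hρ hσ (ptraceL_posSemidef (hρ.submatrix _)) hσ'
    (fun X => (trace_mul_ampliation e ρ X).symm) (fun X => (trace_mul_ampliation e σ X).symm)

lemma relEntropy_ampliation (e : m ≃ C × n) {ρ : Matrix m m ℂ} (hρ : ρ.IsHermitian)
    {τ : Matrix n n ℂ} (hτ : τ.IsHermitian) :
    relEntropy ρ (ampliation e τ) = -(Real.log 2 * vonNeumannEntropy ρ) -
      (ptraceL (ρ.submatrix e.symm e.symm) * cfc Real.log τ).trace.re := by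
  rw [relEntropy, Matrix.mul_sub, trace_sub, Complex.sub_re, re_trace_self_mul_cfc_log hρ,
    ← ampliation_cfc e hτ, trace_mul_ampliation]

end Ampliation

section StrongSubadditivity

/-- Exchange of the first two factors of a triple product, relating `I(A;B|E)` to `I(B;A|E)`. -/
def prodLeftComm (A B E : Type*) : A × B × E ≃ B × A × E where
  toFun x := (x.2.1, x.1, x.2.2)
  invFun x := (x.2.1, x.1, x.2.2)

lemma ptraceL_margBE (ρ : Matrix (A × B × E) (A × B × E) ℂ) : ptraceL (margBE ρ) = margE ρ := by
  ext x y
  exact Finset.sum_comm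

omit [Fintype A] [Fintype E] in
lemma margAE_posSemidef {ρ : Matrix (A × B × E) (A × B × E) ℂ} (hρ : ρ.PosSemidef) :
    (margAE ρ).PosSemidef :=
  posSemidef_of_eq_sum_submatrix hρ (fun b x => (x.1, b, x.2)) fun _ _ => rfl

omit [Fintype B] [Fintype E] in
lemma margBE_posSemidef {ρ : Matrix (A × B × E) (A × B × E) ℂ} (hρ : ρ.PosSemidef) :
    (margBE ρ).PosSemidef :=
  posSemidef_of_eq_sum_submatrix hρ Prod.mk fun _ _ => rfl

omit [Fintype E] in
lemma margE_posSemidef {ρ : Matrix (A × B × E) (A × B × E) ℂ} (hρ : ρ.PosSemidef) :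
    (margE ρ).PosSemidef :=
  posSemidef_of_eq_sum_submatrix (margBE_posSemidef hρ) Prod.mk fun _ _ => Finset.sum_comm

lemma vonNeumannEntropy_zero {n : Type*} [Fintype n] :
    vonNeumannEntropy (0 : Matrix n n ℂ) = 0 := by
  simpa using vonNeumannEntropy_diagonal (0 : n → ℝ)

lemma condMutualInfo_of_isEmpty [IsEmpty B] (ρ : Matrix (A × B × E) (A × B × E) ℂ) :
    condMutualInfo ρ = 0 := by
  have hAE : margAE ρ = 0 := by ext; exact Finset.sum_of_isEmpty _
  have hE : margE ρ = 0 := by ext; exact Finset.sum_eq_zero fun a _ => Finset.sum_of_isEmpty _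
  rw [condMutualInfo, hAE, hE, Subsingleton.elim ρ 0, Subsingleton.elim (margBE 0) 0]
  simp only [vonNeumannEntropy_zero, sub_zero, add_zero]

lemma ptraceL_add_smul_one [DecidableEq A] [DecidableEq B] (τ : Matrix (A × B) (A × B) ℂ)
    (ε : ℝ) : ptraceL (τ + ε • 1) = ptraceL τ + (Fintype.card A * ε) • 1 := by
  ext i j
  by_cases h : i = j <;> simp [ptraceL, Finset.sum_add_distrib, one_apply, h]

lemma ptraceL_ampliation_submatrix_prodLeftComm [DecidableEq A] [DecidableEq B] [DecidableEq E]
    (τ : Matrix (B × E) (B × E) ℂ) :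
    ptraceL ((ampliation (Equiv.refl (A × B × E)) τ).submatrix
      (prodLeftComm A B E).symm (prodLeftComm A B E).symm) =
      ampliation (Equiv.refl (A × E)) (ptraceL τ) := by
  ext x y
  exact (Finset.mul_sum Finset.univ (fun b => τ (b, x.2) (b, y.2))
    ((1 : Matrix A A ℂ) x.1 y.1)).symm

lemma relEntropy_margAE_le [DecidableEq A] [DecidableEq B] [DecidableEq E] [Nonempty B]
    {ρ : Matrix (A × B × E) (A × B × E) ℂ} (hρ : ρ.PosSemidef) {ε : ℝ} (hε : 0 < ε) :
    relEntropy (margAE ρ) (ampliation (Equiv.refl (A × E)) (margE ρ + (Fintype.card B * ε) • 1)) ≤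
      relEntropy ρ (ampliation (Equiv.refl (A × B × E)) (margBE ρ + ε • 1)) := by
  have hBE : (margBE ρ + ε • (1 : Matrix (B × E) (B × E) ℂ)).PosDef :=
    PosDef.posSemidef_add (margBE_posSemidef hρ) (PosDef.one.smul hε)
  have hE : (margE ρ + (Fintype.card B * ε) • (1 : Matrix E E ℂ)).PosDef :=
    PosDef.posSemidef_add (margE_posSemidef hρ) (PosDef.one.smul (by positivity))
  have hσ : ptraceL ((ampliation (Equiv.refl (A × B × E)) (margBE ρ + ε • 1)).submatrix
      (prodLeftComm A B E).symm (prodLeftComm A B E).symm) =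
      ampliation (Equiv.refl (A × E)) (margE ρ + (Fintype.card B * ε) • 1) := by
    rw [ptraceL_ampliation_submatrix_prodLeftComm, ptraceL_add_smul_one, ptraceL_margBE]
  rw [← hσ]
  exact relEntropy_ptraceL_le (prodLeftComm A B E) hρ (posDef_ampliation _ hBE)
    (hσ ▸ posDef_ampliation _ hE)

lemma sub_re_trace_margE_mul_cfc_log_le [DecidableEq B] [DecidableEq E] [Nonempty B]
    {ρ : Matrix (A × B × E) (A × B × E) ℂ} (hρ : ρ.PosSemidef) {ε : ℝ} (hε : 0 < ε) :
    -(Real.log 2 * vonNeumannEntropy (margAE ρ)) -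
        (margE ρ * cfc Real.log (margE ρ + (Fintype.card B * ε) • 1)).trace.re ≤
      -(Real.log 2 * vonNeumannEntropy ρ) -
        (margBE ρ * cfc Real.log (margBE ρ + ε • 1)).trace.re := by
  have h := relEntropy_margAE_le hρ hε
  rwa [relEntropy_ampliation _ (margAE_posSemidef hρ).1
      ((margE_posSemidef hρ).1.add (isHermitian_one.smul (IsSelfAdjoint.all _))),
    relEntropy_ampliation _ hρ.1
      ((margBE_posSemidef hρ).1.add (isHermitian_one.smul (IsSelfAdjoint.all _)))] at h

theorem condMutualInfo_nonneg {ρ : Matrix (A × B × E) (A × B × E) ℂ} (hρ : ρ.PosSemidef) :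
    0 ≤ condMutualInfo ρ := by
  obtain _ | _ := isEmpty_or_nonempty B
  · exact (condMutualInfo_of_isEmpty ρ).ge
  have hcard : Filter.Tendsto (fun ε : ℝ => Fintype.card B * ε) (nhds 0) (nhds 0) := by
    simpa using (continuous_const_mul (Fintype.card B : ℝ)).tendsto 0
  have hlimE := (tendsto_re_trace_self_mul_cfc_log_add_smul_one (margE_posSemidef hρ).1).comp hcard
  have hlimBE := tendsto_re_trace_self_mul_cfc_log_add_smul_one (margBE_posSemidef hρ).1
  have hle : -(Real.log 2 * vonNeumannEntropy (margAE ρ)) -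
        -(Real.log 2 * vonNeumannEntropy (margE ρ)) ≤
      -(Real.log 2 * vonNeumannEntropy ρ) - -(Real.log 2 * vonNeumannEntropy (margBE ρ)) :=
    le_of_tendsto_of_tendsto (b := nhdsWithin 0 (Set.Ioi 0))
      ((hlimE.const_sub _).mono_left nhdsWithin_le_nhds)
      ((hlimBE.const_sub _).mono_left nhdsWithin_le_nhds)
      (eventually_mem_nhdsWithin.mono fun _ hε => sub_re_trace_margE_mul_cfc_log_le hρ hε)
  have hlog : 0 < Real.log 2 := Real.log_pos one_lt_two
  rw [condMutualInfo]
  nlinarith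

end StrongSubadditivity

section ChainRule

variable {A' B' : Type*} [Fintype A'] [Fintype B']

lemma IsState.submatrix_equiv {m n : Type*} [Fintype m] [Fintype n] {ρ : Matrix n n ℂ}
    (hρ : IsState ρ) (e : m ≃ n) : IsState (ρ.submatrix e e) :=
  ⟨hρ.1.submatrix e, (e.sum_comp fun i => ρ i i).trans hρ.2⟩

lemma IsState.ptraceL {ρ : Matrix (A × B) (A × B) ℂ} (hρ : IsState ρ) : IsState (ptraceL ρ) :=
  ⟨ptraceL_posSemidef hρ.1, (Fintype.sum_prod_type_right _).symm.trans hρ.2⟩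

lemma condMutualInfo_submatrix_prodLeftComm (τ : Matrix (A × B × E) (A × B × E) ℂ) :
    condMutualInfo (τ.submatrix (prodLeftComm B A E) (prodLeftComm B A E)) = condMutualInfo τ := by
  have hAE : margAE (τ.submatrix (prodLeftComm B A E) (prodLeftComm B A E)) = margBE τ := rfl
  have hBE : margBE (τ.submatrix (prodLeftComm B A E) (prodLeftComm B A E)) = margAE τ := rfl
  have hE : margE (τ.submatrix (prodLeftComm B A E) (prodLeftComm B A E)) = margE τ := by
    ext x y
    exact Finset.sum_comm
  rw [condMutualInfo, condMutualInfo, hAE, hBE, hE, vonNeumannEntropy_submatrix_equiv]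
  ring

lemma condMutualInfo_submatrix_prodCongr {E' : Type*} [Fintype E']
    (τ : Matrix (A × B × E) (A × B × E) ℂ) (eA : A' ≃ A) (eB : B' ≃ B) (eE : E' ≃ E) :
    condMutualInfo (τ.submatrix (eA.prodCongr (eB.prodCongr eE)) (eA.prodCongr (eB.prodCongr eE))) =
      condMutualInfo τ := by
  set e := eA.prodCongr (eB.prodCongr eE)
  have hAE : margAE (τ.submatrix e e) =
      (margAE τ).submatrix (eA.prodCongr eE) (eA.prodCongr eE) := by
    ext x y
    exact eB.sum_comp fun b => τ (eA x.1, b, eE x.2) (eA y.1, b, eE y.2)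
  have hBE : margBE (τ.submatrix e e) =
      (margBE τ).submatrix (eB.prodCongr eE) (eB.prodCongr eE) := by
    ext x y
    exact eA.sum_comp fun a => τ (a, eB x.1, eE x.2) (a, eB y.1, eE y.2)
  have hE : margE (τ.submatrix e e) = (margE τ).submatrix eE eE := by
    rw [← ptraceL_margBE, ← ptraceL_margBE, hBE]
    ext x y
    exact eB.sum_comp fun b => margBE τ (b, eE x) (b, eE y)
  simp only [condMutualInfo, hAE, hBE, hE, vonNeumannEntropy_submatrix_equiv]

/-- Identification of the systems `A' : B : AE` with `AA' : B : E`. -/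
def absorbEquiv (A A' B E : Type*) : A' × B × (A × E) ≃ (A × A') × B × E where
  toFun x := ((x.2.2.1, x.1), x.2.1, x.2.2.2)
  invFun x := (x.1.2, x.2.1, x.1.1, x.2.2)

/-- A state of `AA' : B : E` seen as a state of `A' : B : AE`, so that its conditional mutual
information becomes `I(A';B|AE)`. -/
def absorbLeft (τ : Matrix ((A × A') × B × E) ((A × A') × B × E) ℂ) :
    Matrix (A' × B × (A × E)) (A' × B × (A × E)) ℂ :=
  τ.submatrix (absorbEquiv A A' B E) (absorbEquiv A A' B E)

/-- The marginal on `A : B : E` of a state of `AA' : B : E`. -/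
def discardLeft (τ : Matrix ((A × A') × B × E) ((A × A') × B × E) ℂ) :
    Matrix (A × B × E) (A × B × E) ℂ :=
  (margBE (absorbLeft τ)).submatrix (prodLeftComm A B E) (prodLeftComm A B E)

lemma IsState.absorbLeft {τ : Matrix ((A × A') × B × E) ((A × A') × B × E) ℂ} (hτ : IsState τ) :
    IsState (absorbLeft τ) :=
  hτ.submatrix_equiv _

lemma IsState.discardLeft {τ : Matrix ((A × A') × B × E) ((A × A') × B × E) ℂ} (hτ : IsState τ) :
    IsState (discardLeft τ) :=
  hτ.absorbLeft.ptraceL.submatrix_equiv _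

omit [Fintype A] [Fintype B] [Fintype E] in
lemma discardLeft_posSemidef {τ : Matrix ((A × A') × B × E) ((A × A') × B × E) ℂ}
    (hτ : τ.PosSemidef) : (discardLeft τ).PosSemidef :=
  (margBE_posSemidef (hτ.submatrix _)).submatrix _

theorem condMutualInfo_chain_rule (τ : Matrix ((A × A') × B × E) ((A × A') × B × E) ℂ) :
    condMutualInfo (discardLeft τ) + condMutualInfo (absorbLeft τ) = condMutualInfo τ := by
  have hE : margE (absorbLeft τ) = margAE (discardLeft τ) := by
    ext x y
    exact Finset.sum_comm
  have hBE : margBE (discardLeft τ) = margBE τ := by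
    ext x y
    exact (Fintype.sum_prod_type fun a => τ (a, x.1, x.2) (a, y.1, y.2)).symm
  have hE' : margE (discardLeft τ) = margE τ := by
    rw [← ptraceL_margBE, hBE, ptraceL_margBE]
  have hSAE : vonNeumannEntropy (margAE (absorbLeft τ)) = vonNeumannEntropy (margAE τ) :=
    vonNeumannEntropy_submatrix_equiv (margAE τ)
      (((Equiv.prodAssoc A' A E).symm).trans ((Equiv.prodComm A' A).prodCongr (Equiv.refl E)))
  have hSABE : vonNeumannEntropy (absorbLeft τ) = vonNeumannEntropy τ :=
    vonNeumannEntropy_submatrix_equiv τ _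
  have hSABE' : vonNeumannEntropy (discardLeft τ) = vonNeumannEntropy (margBE (absorbLeft τ)) :=
    vonNeumannEntropy_submatrix_equiv _ _
  simp only [condMutualInfo, hE, hBE, hE', hSAE, hSABE, hSABE']
  ring

lemma condMutualInfo_discardLeft_le {τ : Matrix ((A × A') × B × E) ((A × A') × B × E) ℂ}
    (hτ : τ.PosSemidef) : condMutualInfo (discardLeft τ) ≤ condMutualInfo τ := by
  rw [← condMutualInfo_chain_rule τ]
  exact le_add_of_nonneg_right (condMutualInfo_nonneg (hτ.submatrix _))

lemma condMutualInfo_absorbLeft_le {τ : Matrix ((A × A') × B × E) ((A × A') × B × E) ℂ}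
    (hτ : τ.PosSemidef) : condMutualInfo (absorbLeft τ) ≤ condMutualInfo τ := by
  rw [← condMutualInfo_chain_rule τ]
  exact le_add_of_nonneg_left (condMutualInfo_nonneg (discardLeft_posSemidef hτ))

/-- The marginal on `A : B : E` of a state of `A : BB' : E`. -/
def discardRight (τ : Matrix (A × (B × B') × E) (A × (B × B') × E) ℂ) :
    Matrix (A × B × E) (A × B × E) ℂ :=
  (discardLeft (τ.submatrix (prodLeftComm _ _ _) (prodLeftComm _ _ _))).submatrix
    (prodLeftComm _ _ _) (prodLeftComm _ _ _)

/-- A state of `A : BB' : E` seen as a state of `A : B' : BE`. -/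
def absorbRight (τ : Matrix (A × (B × B') × E) (A × (B × B') × E) ℂ) :
    Matrix (A × B' × (B × E)) (A × B' × (B × E)) ℂ :=
  (absorbLeft (τ.submatrix (prodLeftComm _ _ _) (prodLeftComm _ _ _))).submatrix
    (prodLeftComm _ _ _) (prodLeftComm _ _ _)

lemma IsState.discardRight {τ : Matrix (A × (B × B') × E) (A × (B × B') × E) ℂ}
    (hτ : IsState τ) : IsState (discardRight τ) :=
  (hτ.submatrix_equiv _).discardLeft.submatrix_equiv _

lemma IsState.absorbRight {τ : Matrix (A × (B × B') × E) (A × (B × B') × E) ℂ}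
    (hτ : IsState τ) : IsState (absorbRight τ) :=
  (hτ.submatrix_equiv _).absorbLeft.submatrix_equiv _

lemma condMutualInfo_discardRight_le {τ : Matrix (A × (B × B') × E) (A × (B × B') × E) ℂ}
    (hτ : τ.PosSemidef) : condMutualInfo (discardRight τ) ≤ condMutualInfo τ := by
  rw [discardRight, condMutualInfo_submatrix_prodLeftComm,
    ← condMutualInfo_submatrix_prodLeftComm τ]
  exact condMutualInfo_discardLeft_le (hτ.submatrix _)

lemma condMutualInfo_absorbRight_le {τ : Matrix (A × (B × B') × E) (A × (B × B') × E) ℂ}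
    (hτ : τ.PosSemidef) : condMutualInfo (absorbRight τ) ≤ condMutualInfo τ := by
  rw [absorbRight, condMutualInfo_submatrix_prodLeftComm,
    ← condMutualInfo_submatrix_prodLeftComm τ]
  exact condMutualInfo_absorbLeft_le (hτ.submatrix _)

theorem condMutualInfo_discard_add_absorb_le
    {τ : Matrix ((A × A') × (B × B') × E) ((A × A') × (B × B') × E) ℂ}
    (hτ : τ.PosSemidef) :
    condMutualInfo (discardRight (discardLeft τ)) + condMutualInfo (absorbRight (absorbLeft τ)) ≤
      condMutualInfo τ := by
  rw [← condMutualInfo_chain_rule τ]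
  exact add_le_add (condMutualInfo_discardRight_le (discardLeft_posSemidef hτ))
    (condMutualInfo_absorbRight_le (hτ.submatrix _))

end ChainRule

section Superadditivity

lemma Esq_margAB_le {τ : Matrix (A × B × E) (A × B × E) ℂ} (hτ : IsState τ) :
    Esq (margAB τ) ≤ 1 / 2 * condMutualInfo τ := by
  let e : A × B × Fin (Fintype.card E) ≃ A × B × E :=
    (Equiv.refl A).prodCongr ((Equiv.refl B).prodCongr (Fintype.equivFin E).symm)
  refine csInf_le ⟨0, ?_⟩ ⟨Fintype.card E, τ.submatrix e e, hτ.submatrix_equiv e, ?_, ?_⟩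
  · rintro _ ⟨d, τ', hτ', -, rfl⟩
    exact mul_nonneg one_half_pos.le (condMutualInfo_nonneg hτ'.1)
  · ext x y
    exact (Fintype.equivFin E).symm.sum_comp fun k => τ (x.1, x.2, k) (y.1, y.2, k)
  · rw [condMutualInfo_submatrix_prodCongr]

lemma le_Esq {ρ : Matrix (A × B) (A × B) ℂ} (hρ : IsState ρ) {x : ℝ}
    (hx : ∀ (d : ℕ) (τ : Matrix (A × B × Fin d) (A × B × Fin d) ℂ),
      IsState τ → margAB τ = ρ → x ≤ 1 / 2 * condMutualInfo τ) : x ≤ Esq ρ := by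
  let e : A × B × Fin 1 ≃ A × B := (Equiv.refl A).prodCongr (Equiv.prodUnique B (Fin 1))
  refine le_csInf ⟨_, 1, ρ.submatrix e e, hρ.submatrix_equiv e, ?_, rfl⟩ ?_
  · ext x y
    exact Fin.sum_univ_one _
  · rintro _ ⟨d, τ, hτ, hτρ, rfl⟩
    exact hx d τ hτ hτρ

lemma Esq_nonneg {ρ : Matrix (A × B) (A × B) ℂ} (hρ : IsState ρ) : 0 ≤ Esq ρ :=
  le_Esq hρ fun _ _ hτ _ => mul_nonneg one_half_pos.le (condMutualInfo_nonneg hτ.1)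

variable {A' B' : Type*} [Fintype A'] [Fintype B']

lemma Esq_submatrix_prodCongr_le {ρ : Matrix (A × B) (A × B) ℂ} (hρ : IsState ρ) (eA : A' ≃ A)
    (eB : B' ≃ B) : Esq (ρ.submatrix (eA.prodCongr eB) (eA.prodCongr eB)) ≤ Esq ρ := by
  refine le_Esq hρ ?_
  rintro d τ hτ rfl
  rw [← condMutualInfo_submatrix_prodCongr τ eA eB (Equiv.refl (Fin d))]
  exact Esq_margAB_le
    (hτ.submatrix_equiv (eA.prodCongr (eB.prodCongr (Equiv.refl (Fin d)))))

lemma Esq_submatrix_prodCongr {ρ : Matrix (A × B) (A × B) ℂ} (hρ : IsState ρ) (eA : A' ≃ A)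
    (eB : B' ≃ B) : Esq (ρ.submatrix (eA.prodCongr eB) (eA.prodCongr eB)) = Esq ρ := by
  refine (Esq_submatrix_prodCongr_le hρ eA eB).antisymm ?_
  have h := Esq_submatrix_prodCongr_le (hρ.submatrix_equiv (eA.prodCongr eB)) eA.symm eB.symm
  rwa [submatrix_submatrix, ← Equiv.prodCongr_symm, Equiv.self_comp_symm, submatrix_id_id] at h

lemma margAB_discardRight_discardLeft
    (τ : Matrix ((A × A') × (B × B') × E) ((A × A') × (B × B') × E) ℂ) :
    margAB (discardRight (discardLeft τ)) =
      ptraceR ((margAB τ).submatrix (Equiv.prodProdProdComm A B A' B')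
        (Equiv.prodProdProdComm A B A' B')) := by
  ext x y
  simp only [margAB, discardRight, discardLeft, absorbLeft, margBE, submatrix_apply, absorbEquiv,
    prodLeftComm, Equiv.coe_fn_mk, ptraceR, Fintype.sum_prod_type, Equiv.prodProdProdComm_apply]
  rw [Finset.sum_comm_cycle]
  exact Finset.sum_congr rfl fun a' _ => Finset.sum_comm

lemma margAB_absorbRight_absorbLeft
    (τ : Matrix ((A × A') × (B × B') × E) ((A × A') × (B × B') × E) ℂ) :
    margAB (absorbRight (absorbLeft τ)) =
      ptraceL ((margAB τ).submatrix (Equiv.prodProdProdComm A B A' B')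
        (Equiv.prodProdProdComm A B A' B')) := by
  ext x y
  simp only [margAB, absorbRight, absorbLeft, submatrix_apply, absorbEquiv, prodLeftComm,
    Equiv.coe_fn_mk, ptraceL, Fintype.sum_prod_type, Equiv.prodProdProdComm_apply]
  exact Finset.sum_comm

theorem Esq_ptraceR_add_Esq_ptraceL_le {σ : Matrix ((A × A') × B × B') ((A × A') × B × B') ℂ}
    (hσ : IsState σ) :
    Esq (ptraceR (σ.submatrix (Equiv.prodProdProdComm A B A' B')
        (Equiv.prodProdProdComm A B A' B'))) +
      Esq (ptraceL (σ.submatrix (Equiv.prodProdProdComm A B A' B')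
        (Equiv.prodProdProdComm A B A' B'))) ≤ Esq σ := by
  refine le_Esq hσ ?_
  rintro d τ hτ rfl
  rw [← margAB_discardRight_discardLeft, ← margAB_absorbRight_absorbLeft]
  linarith [condMutualInfo_discard_add_absorb_le hτ.1, Esq_margAB_le hτ.discardLeft.discardRight,
    Esq_margAB_le hτ.absorbLeft.absorbRight]

end Superadditivity

section TensorPower

lemma ptraceR_kronecker (ρ : Matrix A A ℂ) (ρ' : Matrix B B ℂ) :
    ptraceR (ρ ⊗ₖ ρ') = ρ'.trace • ρ := by
  ext i j
  simp [ptraceR, trace, Finset.mul_sum, mul_comm]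

lemma ptraceL_kronecker (ρ : Matrix A A ℂ) (ρ' : Matrix B B ℂ) :
    ptraceL (ρ ⊗ₖ ρ') = ρ.trace • ρ' := by
  ext i j
  simp [ptraceL, trace, Finset.sum_mul]

lemma IsState.kronecker {ρ : Matrix A A ℂ} {ρ' : Matrix B B ℂ} (hρ : IsState ρ)
    (hρ' : IsState ρ') : IsState (ρ ⊗ₖ ρ') :=
  ⟨hρ.1.kronecker hρ'.1, by rw [trace_kronecker, hρ.2, hρ'.2, one_mul]⟩

/-- The tensor product of two bipartite states, as a bipartite state for the cut `AA' : BB'`. -/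
def bipartiteTensor {A A' B B' : Type*} (ρ : Matrix (A × B) (A × B) ℂ)
    (ρ' : Matrix (A' × B') (A' × B') ℂ) : Matrix ((A × A') × B × B') ((A × A') × B × B') ℂ :=
  (ρ ⊗ₖ ρ').submatrix (Equiv.prodProdProdComm A A' B B') (Equiv.prodProdProdComm A A' B B')

variable {A' B' : Type*} [Fintype A'] [Fintype B']

lemma IsState.bipartiteTensor {ρ : Matrix (A × B) (A × B) ℂ} {ρ' : Matrix (A' × B') (A' × B') ℂ}
    (hρ : IsState ρ) (hρ' : IsState ρ') : IsState (bipartiteTensor ρ ρ') :=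
  (hρ.kronecker hρ').submatrix_equiv _

theorem Esq_add_Esq_le {ρ : Matrix (A × B) (A × B) ℂ} {ρ' : Matrix (A' × B') (A' × B') ℂ}
    (hρ : IsState ρ) (hρ' : IsState ρ') : Esq ρ + Esq ρ' ≤ Esq (bipartiteTensor ρ ρ') := by
  have h := Esq_ptraceR_add_Esq_ptraceL_le (hρ.bipartiteTensor hρ')
  have hsub : (bipartiteTensor ρ ρ').submatrix (Equiv.prodProdProdComm A B A' B')
      (Equiv.prodProdProdComm A B A' B') = ρ ⊗ₖ ρ' := rfl
  rwa [hsub, ptraceR_kronecker, ptraceL_kronecker, hρ.2, hρ'.2, one_smul, one_smul] at h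

lemma tensorPow_zero {A B : Type*} (ρ : Matrix (A × B) (A × B) ℂ) : tensorPow ρ 0 = 1 := by
  ext x y
  rw [Subsingleton.elim x y, one_apply_eq]
  exact Fin.prod_univ_zero _

lemma tensorPow_succ {A B : Type*} (ρ : Matrix (A × B) (A × B) ℂ) (n : ℕ) :
    tensorPow ρ (n + 1) = (bipartiteTensor ρ (tensorPow ρ n)).submatrix
      ((Fin.consEquiv fun _ => A).symm.prodCongr (Fin.consEquiv fun _ => B).symm)
      ((Fin.consEquiv fun _ => A).symm.prodCongr (Fin.consEquiv fun _ => B).symm) := by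
  ext x y
  exact Fin.prod_univ_succ _

lemma IsState.tensorPow {ρ : Matrix (A × B) (A × B) ℂ} (hρ : IsState ρ) (n : ℕ) :
    IsState (tensorPow ρ n) := by
  induction n with
  | zero =>
    rw [tensorPow_zero]
    exact ⟨PosSemidef.one, by simp⟩
  | succ n ih =>
    rw [tensorPow_succ]
    exact (hρ.bipartiteTensor ih).submatrix_equiv _

theorem mul_Esq_le_Esq_tensorPow {ρ : Matrix (A × B) (A × B) ℂ} (hρ : IsState ρ) (n : ℕ) :
    n * Esq ρ ≤ Esq (tensorPow ρ n) := by
  induction n with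
  | zero => simpa using Esq_nonneg (hρ.tensorPow 0)
  | succ n ih =>
    have hn := hρ.tensorPow n
    calc ((n + 1 : ℕ) : ℝ) * Esq ρ = Esq ρ + n * Esq ρ := by push_cast; ring
      _ ≤ Esq ρ + Esq (tensorPow ρ n) := by gcongr
      _ ≤ Esq (bipartiteTensor ρ (tensorPow ρ n)) := Esq_add_Esq_le hρ hn
      _ = Esq (tensorPow ρ (n + 1)) := by
        rw [tensorPow_succ, Esq_submatrix_prodCongr (hρ.bipartiteTensor hn)]

end TensorPower

section EntanglementOfFormation

lemma IsState.ptraceR {ρ : Matrix (A × B) (A × B) ℂ} (hρ : IsState ρ) : IsState (ptraceR ρ) :=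
  (hρ.submatrix_equiv (Equiv.prodComm B A)).ptraceL

lemma blockDiagonal_posSemidef {n K : Type*} [Finite n] [Finite K] [DecidableEq K]
    {M : K → Matrix n n ℂ} (hM : ∀ k, (M k).PosSemidef) : (blockDiagonal M).PosSemidef := by
  have := Fintype.ofFinite n
  have := Fintype.ofFinite K
  open scoped MatrixOrder in
  choose B hB using fun k => CStarAlgebra.nonneg_iff_eq_star_mul_self.1 (hM k).nonneg
  rw [funext hB, blockDiagonal_mul]
  exact blockDiagonal_conjTranspose B ▸ posSemidef_conjTranspose_mul_self _

lemma vonNeumannEntropy_blockDiagonal_smul {K : Type*} [Fintype K] [DecidableEq K]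
    (p : K → ℝ) {φ : K → Matrix A A ℂ} (hφ : ∀ k, IsState (φ k)) :
    vonNeumannEntropy (blockDiagonal fun k => (p k : ℂ) • φ k) =
      ∑ k, p k * vonNeumannEntropy (φ k) + vonNeumannEntropy (diagonal fun k => (p k : ℂ)) := by
  rw [vonNeumannEntropy_blockDiagonal fun k => (hφ k).1.1.smul (Complex.conj_ofReal (p k)),
    vonNeumannEntropy_diagonal, Finset.sum_div, ← Finset.sum_add_distrib]
  refine Finset.sum_congr rfl fun k _ => ?_
  rw [vonNeumannEntropy_smul (hφ k).1.1, (hφ k).2, Complex.one_re, one_mul]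

variable {K : Type*} [DecidableEq K]

/-- The classical-quantum extension `∑ₖ pₖ φₖ ⊗ |k⟩⟨k|` of the average state `∑ₖ pₖ φₖ` of an
ensemble. -/
def cqState (p : K → ℝ) (φ : K → Matrix (A × B) (A × B) ℂ) :
    Matrix (A × B × K) (A × B × K) ℂ :=
  (blockDiagonal fun k => (p k : ℂ) • φ k).submatrix
    (Equiv.prodAssoc A B K).symm (Equiv.prodAssoc A B K).symm

lemma cqState_apply {A B : Type*} (p : K → ℝ) (φ : K → Matrix (A × B) (A × B) ℂ) (x y : A × B × K) :
    cqState p φ x y =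
      if x.2.2 = y.2.2 then (p x.2.2 : ℂ) * φ x.2.2 (x.1, x.2.1) (y.1, y.2.1) else 0 :=
  rfl

lemma margAB_cqState {A B : Type*} [Fintype K] (p : K → ℝ) (φ : K → Matrix (A × B) (A × B) ℂ) :
    margAB (cqState p φ) = ∑ k, (p k : ℂ) • φ k := by
  ext x y
  simp only [margAB, cqState_apply, if_true, Matrix.sum_apply, Matrix.smul_apply, smul_eq_mul]

lemma margAE_cqState (p : K → ℝ) (φ : K → Matrix (A × B) (A × B) ℂ) :
    margAE (cqState p φ) = blockDiagonal fun k => (p k : ℂ) • ptraceR (φ k) := by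
  ext x y
  by_cases h : x.2 = y.2 <;>
    simp [margAE, cqState_apply, blockDiagonal_apply, ptraceR, h, Finset.mul_sum]

lemma margBE_cqState (p : K → ℝ) (φ : K → Matrix (A × B) (A × B) ℂ) :
    margBE (cqState p φ) = blockDiagonal fun k => (p k : ℂ) • ptraceL (φ k) := by
  ext x y
  by_cases h : x.2 = y.2 <;>
    simp [margBE, cqState_apply, blockDiagonal_apply, ptraceL, h, Finset.mul_sum]

lemma margE_cqState (p : K → ℝ) {φ : K → Matrix (A × B) (A × B) ℂ} (hφ : ∀ k, (φ k).trace = 1) :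
    margE (cqState p φ) = diagonal fun k => (p k : ℂ) := by
  ext k l
  have hk : ∑ a, ∑ b, φ k (a, b) (a, b) = 1 := by
    rw [← Fintype.sum_prod_type fun x => φ k x x, ← hφ k]
    rfl
  obtain rfl | h := eq_or_ne k l
  · simp only [margE, cqState_apply, if_true, ← Finset.mul_sum, hk, mul_one, diagonal_apply_eq]
  · simp only [margE, cqState_apply, if_neg h, Finset.sum_const_zero, diagonal_apply_ne _ h]

lemma isState_cqState [Fintype K] {p : K → ℝ} (hp : ∀ k, 0 ≤ p k) (hp1 : ∑ k, p k = 1)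
    {φ : K → Matrix (A × B) (A × B) ℂ} (hφ : ∀ k, IsState (φ k)) : IsState (cqState p φ) := by
  have hp' : ∀ k, 0 ≤ (p k : ℂ) := fun k => by exact_mod_cast hp k
  refine IsState.submatrix_equiv
    ⟨blockDiagonal_posSemidef fun k => (hφ k).1.smul (hp' k), ?_⟩ _
  simp only [trace_blockDiagonal, trace_smul, (hφ _).2, smul_eq_mul, mul_one]
  exact_mod_cast hp1

lemma condMutualInfo_cqState [Fintype K] (p : K → ℝ) {φ : K → Matrix (A × B) (A × B) ℂ}
    (hφ : ∀ k, IsState (φ k)) :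
    condMutualInfo (cqState p φ) = ∑ k, p k * (vonNeumannEntropy (ptraceR (φ k)) +
      vonNeumannEntropy (ptraceL (φ k)) - vonNeumannEntropy (φ k)) := by
  rw [condMutualInfo, margAE_cqState, margBE_cqState, margE_cqState p fun k => (hφ k).2, cqState,
    vonNeumannEntropy_submatrix_equiv, vonNeumannEntropy_blockDiagonal_smul p hφ,
    vonNeumannEntropy_blockDiagonal_smul p fun k => (hφ k).ptraceR,
    vonNeumannEntropy_blockDiagonal_smul p fun k => (hφ k).ptraceL]
  simp only [mul_sub, mul_add, Finset.sum_sub_distrib, Finset.sum_add_distrib]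
  ring

variable {n : Type*} [Fintype n]

lemma isState_outer {ψ : n → ℂ} (hψ : ∑ i, ‖ψ i‖ ^ 2 = 1) : IsState (outer ψ) := by
  refine ⟨posSemidef_vecMulVec_self_star ψ, ?_⟩
  rw [outer, trace_vecMulVec, dotProduct]
  simp only [Pi.star_apply, Complex.star_def, Complex.mul_conj']
  exact_mod_cast hψ

lemma vonNeumannEntropy_outer {ψ : n → ℂ} (hψ : ∑ i, ‖ψ i‖ ^ 2 = 1) :
    vonNeumannEntropy (outer ψ) = 0 := by
  have hone : replicateRow Unit (star ψ) * replicateCol Unit ψ =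
      diagonal fun _ : Unit => ((1 : ℝ) : ℂ) := by
    ext i j
    rw [Subsingleton.elim j i, diagonal_apply_eq, Complex.ofReal_one, ← (isState_outer hψ).2, outer,
      trace_vecMulVec, dotProduct_comm]
    rfl
  have hcol : outer ψ = replicateCol Unit ψ * replicateRow Unit (star ψ) := vecMulVec_eq Unit _ _
  rw [hcol, vonNeumannEntropy_mul_comm (hcol ▸ (isState_outer hψ).1.1)
    (hone ▸ isHermitian_diagonal_iff.2 fun _ => Complex.conj_ofReal 1), hone,
    vonNeumannEntropy_diagonal]
  simp

lemma sum_eigenvalues_smul_outer_eigenvectorBasis [DecidableEq n] {ρ : Matrix n n ℂ}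
    (hρ : ρ.IsHermitian) :
    ∑ i, (hρ.eigenvalues i : ℂ) • outer (hρ.eigenvectorBasis i) = ρ := by
  have hdiag := cfc_eq_eigenvectorUnitary_mul_diagonal_mul hρ fun x => x
  rw [cfc_id' ℝ ρ hρ.isSelfAdjoint] at hdiag
  conv_rhs => rw [hdiag]
  ext i j
  rw [Matrix.mul_apply, Matrix.sum_apply]
  simp only [Matrix.smul_apply, outer, vecMulVec_apply, mul_diagonal, conjTranspose_apply,
    IsHermitian.eigenvectorUnitary_apply, Pi.star_apply, smul_eq_mul]
  exact Finset.sum_congr rfl fun k _ => by ring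

lemma vonNeumannEntropy_ptraceL_outer (ψ : A × B → ℂ) :
    vonNeumannEntropy (ptraceL (outer ψ)) = vonNeumannEntropy (ptraceR (outer ψ)) := by
  let M : Matrix A B ℂ := of fun a b => ψ (a, b)
  have hR : ptraceR (outer ψ) = M * Mᴴ := rfl
  have hL : ptraceL (outer ψ) = (Mᴴ * M)ᵀ := by
    ext b b'
    exact Finset.sum_congr rfl fun a _ => mul_comm _ _
  rw [hL, vonNeumannEntropy_transpose, hR, vonNeumannEntropy_mul_comm
    (isHermitian_conjTranspose_mul_self M) (isHermitian_mul_conjTranspose_self M)]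

lemma Esq_sum_smul_outer_le {K : Type*} [Fintype K] {p : K → ℝ} (hp : ∀ k, 0 ≤ p k)
    (hp1 : ∑ k, p k = 1) {ψ : K → A × B → ℂ} (hψ : ∀ k, ∑ i, ‖ψ k i‖ ^ 2 = 1) :
    Esq (∑ k, (p k : ℂ) • outer (ψ k)) ≤ ∑ k, p k * vonNeumannEntropy (ptraceR (outer (ψ k))) := by
  have hstate : ∀ k, IsState (outer (ψ k)) := fun k => isState_outer (hψ k)
  have h := Esq_margAB_le (isState_cqState hp hp1 hstate)
  simp only [margAB_cqState, condMutualInfo_cqState p hstate, vonNeumannEntropy_ptraceL_outer,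
    vonNeumannEntropy_outer (hψ _), sub_zero, ← two_mul, mul_left_comm _ (2 : ℝ),
    ← Finset.mul_sum] at h
  linarith

theorem Esq_le_EoF {ρ : Matrix (A × B) (A × B) ℂ} (hρ : IsState ρ) : Esq ρ ≤ EoF ρ := by
  let e := (Fintype.equivFin (A × B)).symm
  refine le_csInf ⟨_, Fintype.card (A × B), fun k => hρ.1.1.eigenvalues (e k),
    fun k => hρ.1.1.eigenvectorBasis (e k), fun k => hρ.1.eigenvalues_nonneg _, ?_, ?_, ?_, rfl⟩ ?_
  · rw [e.sum_comp]
    exact Complex.ofReal_injective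
      ((Complex.ofReal_sum _ _).trans (hρ.1.1.trace_eq_sum_eigenvalues.symm.trans hρ.2))
  · intro k
    rw [← EuclideanSpace.norm_sq_eq, OrthonormalBasis.norm_eq_one, one_pow]
  · rw [e.sum_comp fun i => (hρ.1.1.eigenvalues i : ℂ) • outer (hρ.1.1.eigenvectorBasis i)]
    exact sum_eigenvalues_smul_outer_eigenvectorBasis hρ.1.1
  · rintro _ ⟨n, p, ψ, hp, hp1, hψ, rfl, rfl⟩
    exact Esq_sum_smul_outer_le hp hp1 hψ

end EntanglementOfFormation

/-- `n · E_sq(ρ) ≤ E_F(ρ^{⊗n})` for every `n ≥ 1`; consequently squashed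
entanglement is upper bounded by the entanglement cost
`E_C(ρ) = lim_{n→∞} (1/n) E_F(ρ^{⊗n})`. -/
theorem squashedEntanglement_le_entanglementCost
    {A B : Type*} [Fintype A] [Fintype B]
    (ρ : Matrix (A × B) (A × B) ℂ) (hρ : IsState ρ) :
    (∀ n : ℕ, 1 ≤ n → (n : ℝ) * Esq ρ ≤ EoF (tensorPow ρ n)) ∧
    (∀ L : ℝ,
      Filter.Tendsto (fun n : ℕ => (1 / (n : ℝ)) * EoF (tensorPow ρ n)) Filter.atTop (nhds L) →
      Esq ρ ≤ L) := by
  have hle : ∀ n : ℕ, n * Esq ρ ≤ EoF (tensorPow ρ n) := fun n =>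
    (mul_Esq_le_Esq_tensorPow hρ n).trans (Esq_le_EoF (hρ.tensorPow n))
  refine ⟨fun n _ => hle n, fun L hL => ge_of_tendsto hL ?_⟩
  filter_upwards [Filter.eventually_gt_atTop 0] with n hn
  rw [one_div, le_inv_mul_iff₀ (Nat.cast_pos.2 hn)]
  exact hle n

end
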